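/- Let t₁, t₂ ≥ 0 with t₁ + t₂ = 1, let n ≥ 0, and let (X,Y) ∈ Gr²(V) satisfy dim(X ∩ V_k) = dim(Y ∩ V_k) for all k ≥ n; set m = dim(X ∩ V_n). Then ρ_{t₁,t₂}(U^n(X,Y)) = q^{m(m+1) − Σ_{k=1}^n k·(Sym(X)_k + Sym(Y)_k)} · t₁^m · t₂^{n−m}. (Proposition 5.9: explicit values of the measure ρ_{t₁,t₂} on the basic sets of the groupoid Gr²(V).) -/

import Mathlib

open MeasureTheory

variable (F : Type) [Field F] [Fintype F] [DecidableEq F]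

/-- `V = ⊕_{i≥0} F`: the `F`-vector space of finitely supported sequences. -/
abbrev Vinf := ℕ →₀ F

/-- `V_n`: the span of the first `n` standard basis vectors of `V`. -/
def Vn (n : ℕ) : Submodule F (Vinf F) where
  carrier := {v | ∀ i : ℕ, n ≤ i → v i = 0}
  add_mem' := by
    intro a b ha hb i hi
    simp [Finsupp.add_apply, ha i hi, hb i hi]
  zero_mem' := by
    intro i hi
    simp
  smul_mem' := by
    intro c v hv i hi
    simp [Finsupp.smul_apply, hv i hi]

/-- The group `GLB` of `F`-linear automorphisms `g` of `V` with `g(V_n) = V_n` for all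
sufficiently large `n`. -/
def GLBgrp : Subgroup ((Vinf F) ≃ₗ[F] (Vinf F)) where
  carrier := {g | ∃ N : ℕ, ∀ n : ℕ, N ≤ n →
    Submodule.map (g : (Vinf F) →ₗ[F] (Vinf F)) (Vn F n) = Vn F n}
  one_mem' := by
    refine ⟨0, fun n _ => ?_⟩
    have h1 : ((1 : (Vinf F) ≃ₗ[F] (Vinf F)) : (Vinf F) →ₗ[F] (Vinf F)) = LinearMap.id := by
      ext x; rfl
    rw [h1, Submodule.map_id]
  mul_mem' := by
    rintro g h ⟨Ng, hg⟩ ⟨Nh, hh⟩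
    refine ⟨max Ng Nh, fun n hn => ?_⟩
    have h1 : ((g * h : (Vinf F) ≃ₗ[F] (Vinf F)) : (Vinf F) →ₗ[F] (Vinf F))
        = ((g : (Vinf F) →ₗ[F] (Vinf F)).comp (h : (Vinf F) →ₗ[F] (Vinf F))) := by
      ext x; rfl
    rw [h1, Submodule.map_comp, hh n (le_trans (le_max_right _ _) hn),
      hg n (le_trans (le_max_left _ _) hn)]
  inv_mem' := by
    rintro g ⟨N, hg⟩
    refine ⟨N, fun n hn => ?_⟩
    conv_lhs => rw [← hg n hn]
    rw [← Submodule.map_comp]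
    have h1 : ((g⁻¹ : (Vinf F) ≃ₗ[F] (Vinf F)) : (Vinf F) →ₗ[F] (Vinf F)).comp
        ((g : (Vinf F) →ₗ[F] (Vinf F))) = LinearMap.id := by
      have h0 : ((g⁻¹ * g : (Vinf F) ≃ₗ[F] (Vinf F)) : (Vinf F) →ₗ[F] (Vinf F))
          = ((g⁻¹ : (Vinf F) ≃ₗ[F] (Vinf F)) : (Vinf F) →ₗ[F] (Vinf F)).comp
            ((g : (Vinf F) →ₗ[F] (Vinf F))) := by
        ext x; rfl
      rw [← h0, inv_mul_cancel]
      ext x; rfl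
    rw [h1, Submodule.map_id]

/-- The Borel subgroup `B ⊆ GLB` of automorphisms with `g(V_n) = V_n` for all `n`. -/
def Bgrp : Subgroup ((Vinf F) ≃ₗ[F] (Vinf F)) where
  carrier := {g | ∀ n : ℕ,
    Submodule.map (g : (Vinf F) →ₗ[F] (Vinf F)) (Vn F n) = Vn F n}
  one_mem' := by
    intro n
    have h1 : ((1 : (Vinf F) ≃ₗ[F] (Vinf F)) : (Vinf F) →ₗ[F] (Vinf F)) = LinearMap.id := by
      ext x; rfl
    rw [h1, Submodule.map_id]
  mul_mem' := by
    intro g h hg hh n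
    have h1 : ((g * h : (Vinf F) ≃ₗ[F] (Vinf F)) : (Vinf F) →ₗ[F] (Vinf F))
        = ((g : (Vinf F) →ₗ[F] (Vinf F)).comp (h : (Vinf F) →ₗ[F] (Vinf F))) := by
      ext x; rfl
    rw [h1, Submodule.map_comp, hh n, hg n]
  inv_mem' := by
    intro g hg n
    conv_lhs => rw [← hg n]
    rw [← Submodule.map_comp]
    have h1 : ((g⁻¹ : (Vinf F) ≃ₗ[F] (Vinf F)) : (Vinf F) →ₗ[F] (Vinf F)).comp
        ((g : (Vinf F) →ₗ[F] (Vinf F))) = LinearMap.id := by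
      have h0 : ((g⁻¹ * g : (Vinf F) ≃ₗ[F] (Vinf F)) : (Vinf F) →ₗ[F] (Vinf F))
          = ((g⁻¹ : (Vinf F) ≃ₗ[F] (Vinf F)) : (Vinf F) →ₗ[F] (Vinf F)).comp
            ((g : (Vinf F) →ₗ[F] (Vinf F))) := by
        ext x; rfl
      rw [← h0, inv_mul_cancel]
      ext x; rfl
    rw [h1, Submodule.map_id]

/-- The Borel σ-algebra of `B` for the topology of pointwise convergence: the σ-algebra
generated by the evaluations `g ↦ g(e_i)` (with the finite set `V` discrete). -/
noncomputable instance mB : MeasurableSpace ↥(Bgrp F) := by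
  letI : MeasurableSpace (Vinf F) := ⊤
  exact MeasurableSpace.comap
    (fun g => fun i : ℕ => ((g : (Vinf F) ≃ₗ[F] (Vinf F)) (Finsupp.single i 1)))
    MeasurableSpace.pi

/-- The increment `Sym(X)_{k+1} = dim(X ∩ V_{k+1}) - dim(X ∩ V_k)` of the symbol of a
subspace `X ⊆ V` (0-based indexing: `symInc X k` is the `(k+1)`-st, 1-based, entry). -/
noncomputable def symInc (X : Submodule F (Vinf F)) (k : ℕ) : ℕ :=
  Module.finrank F ↥(X ⊓ Vn F (k + 1)) - Module.finrank F ↥(X ⊓ Vn F k)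

/-- The coordinate subspace `C(x) = span{e_i : x_i = 1}` of a 0–1 sequence `x`. -/
noncomputable def coordSpan (x : ℕ → Bool) : Submodule F (Vinf F) :=
  Submodule.span F ((fun i : ℕ => Finsupp.single i (1 : F)) '' {i : ℕ | x i = true})

/-- The map `φ : {0,1}^ℕ × B → Gr(V)`, `(x, g) ↦ g·C(x)`. -/
noncomputable def phiMap (p : (ℕ → Bool) × ↥(Bgrp F)) : Submodule F (Vinf F) :=
  Submodule.map ((p.2 : (Vinf F) ≃ₗ[F] (Vinf F)) : (Vinf F) →ₗ[F] (Vinf F)) (coordSpan F p.1)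

/-- The basic set `U^n(X,Y)` of the groupoid `Gr²(V)`: pairs `(Z,W)` of `GLB`-equivalent
subspaces with `Z ∩ V_n = X ∩ V_n`, `W ∩ V_n = Y ∩ V_n` and `dim(Z ∩ V_k) = dim(W ∩ V_k)`
for all `k ≥ n`. -/
def Upair (n : ℕ) (X Y : Submodule F (Vinf F)) :
    Set (Submodule F (Vinf F) × Submodule F (Vinf F)) :=
  {p | (∃ g ∈ GLBgrp F, Submodule.map (g : (Vinf F) →ₗ[F] (Vinf F)) p.1 = p.2) ∧
    p.1 ⊓ Vn F n = X ⊓ Vn F n ∧ p.2 ⊓ Vn F n = Y ⊓ Vn F n ∧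
    ∀ k : ℕ, n ≤ k → Module.finrank F ↥(p.1 ⊓ Vn F k) = Module.finrank F ↥(p.2 ⊓ Vn F k)}

/-- The σ-algebra of the groupoid `Gr²(V)`, generated by the sets `U^n(X,Y)`. -/
noncomputable instance mGr2 :
    MeasurableSpace (Submodule F (Vinf F) × Submodule F (Vinf F)) :=
  MeasurableSpace.generateFrom
    {A | ∃ (n : ℕ) (X Y : Submodule F (Vinf F)), A = Upair F n X Y}

/-- The set `T` of pairs of 0–1 sequences which eventually agree and whose initial segments
have matching numbers of ones. -/
def Tset : Set ((ℕ → Bool) × (ℕ → Bool)) :=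
  {p | ∃ N : ℕ, (∀ k : ℕ, N < k → p.1 k = p.2 k) ∧
    ((Finset.range (N + 1)).filter (fun k => p.1 k = true)).card
      = ((Finset.range (N + 1)).filter (fun k => p.2 k = true)).card}

/-- The basic subset `A(i₁,...,i_n; j₁,...,j_n)` of `T`. -/
def Aset (n : ℕ) (c d : Fin n → Bool) : Set ↥Tset :=
  {p | (∀ k : Fin n, p.1.1 (k : ℕ) = c k ∧ p.1.2 (k : ℕ) = d k) ∧
    ∀ k : ℕ, n ≤ k → p.1.1 k = p.1.2 k}

/-- The σ-algebra of `T`, generated by the sets `A(i₁,...,i_n; j₁,...,j_n)`. -/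
noncomputable instance mT : MeasurableSpace ↥Tset :=
  MeasurableSpace.generateFrom {S | ∃ (n : ℕ) (c d : Fin n → Bool), S = Aset n c d}

/-- The number of ones in a finite 0–1 sequence. -/
def trueCount {n : ℕ} (c : Fin n → Bool) : ℕ :=
  (Finset.univ.filter (fun k => c k = true)).card

/-- The map `ψ : T × B × B → Gr(V) × Gr(V)`, `ψ((x,y),g,h) = (g·C(x), h·C(y))`. -/
noncomputable def psiMap (w : ↥Tset × (↥(Bgrp F) × ↥(Bgrp F))) :
    Submodule F (Vinf F) × Submodule F (Vinf F) :=
  (Submodule.map ((w.2.1 : (Vinf F) ≃ₗ[F] (Vinf F)) : (Vinf F) →ₗ[F] (Vinf F))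
      (coordSpan F w.1.1.1),
   Submodule.map ((w.2.2 : (Vinf F) ≃ₗ[F] (Vinf F)) : (Vinf F) →ₗ[F] (Vinf F))
      (coordSpan F w.1.1.2))


set_option linter.unusedSectionVars false
set_option linter.unusedVariables false

/-- number of ones among the first `k` entries -/
def cnt (c : ℕ → Bool) (k : ℕ) : ℕ := ((Finset.range k).filter (fun i => c i = true)).card

theorem cnt_succ (c : ℕ → Bool) (k : ℕ) : cnt c (k+1) = cnt c k + (if c k = true then 1 else 0) := by
  unfold cnt
  rw [Finset.range_add_one, Finset.filter_insert]
  split_ifs with h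
  · rw [Finset.card_insert_of_notMem (by simp)]
  · simp

/-- coordinate subspace of the first `n` entries -/
noncomputable def dsp (c : ℕ → Bool) (n : ℕ) : Submodule F (Vinf F) :=
  Finsupp.supported F F {i | i < n ∧ c i = true}

theorem Vn_eq (n : ℕ) : Vn F n = Finsupp.supported F F {i | i < n} := by
  ext v
  rw [Finsupp.mem_supported']
  simp [Vn]

theorem mem_Vn {n : ℕ} {v : Vinf F} : v ∈ Vn F n ↔ ∀ i, n ≤ i → v i = 0 := Iff.rfl

theorem Vn_mono {a b : ℕ} (h : a ≤ b) : Vn F a ≤ Vn F b := fun v hv i hi => hv i (h.trans hi)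

theorem finrank_supported (s : Finset ℕ) :
    Module.finrank F (Finsupp.supported F F (s : Set ℕ)) = s.card := by
  rw [LinearEquiv.finrank_eq (Finsupp.supportedEquivFinsupp (M := F) (R := F) (s : Set ℕ))]
  simp

instance finite_supported (s : Finset ℕ) :
    Module.Finite F (Finsupp.supported F F (s : Set ℕ)) := 
  Module.Finite.equiv (Finsupp.supportedEquivFinsupp (M := F) (R := F) (s : Set ℕ)).symm

theorem finrank_dsp (c : ℕ → Bool) (n : ℕ) : Module.finrank F (dsp F c n) = cnt c n := by
  have h : {i | i < n ∧ c i = true}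
      = (((Finset.range n).filter (fun i => c i = true) : Finset ℕ) : Set ℕ) := by
    ext; simp
  unfold dsp cnt
  rw [← finrank_supported F, h]

theorem finrank_Vn (n : ℕ) : Module.finrank F (Vn F n) = n := by
  have h := finrank_supported F (Finset.range n)
  rw [Finset.card_range] at h
  have h2 : {i | i < n} = ((Finset.range n : Finset ℕ) : Set ℕ) := by ext; simp
  rw [Vn_eq, h2, h]

instance finite_Vn (n : ℕ) : Module.Finite F (Vn F n) := by
  have h := finite_supported F (Finset.range n)
  have h2 : {i | i < n} = ((Finset.range n : Finset ℕ) : Set ℕ) := by ext; simp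
  rw [Vn_eq, h2]
  exact h

instance finite_inf_Vn (X : Submodule F (Vinf F)) (n : ℕ) : Module.Finite F ↥(X ⊓ Vn F n) :=
  Submodule.finiteDimensional_of_le (inf_le_right : X ⊓ Vn F n ≤ Vn F n)

theorem coordSpan_inf (x : ℕ → Bool) (k : ℕ) : coordSpan F x ⊓ Vn F k = dsp F x k := by
  unfold coordSpan dsp
  rw [← Finsupp.supported_eq_span_single, Vn_eq, ← Finsupp.supported_inter]
  congr 1
  ext; simp [and_comm]

theorem dsp_inf (x : ℕ → Bool) {k n : ℕ} (h : k ≤ n) : dsp F x n ⊓ Vn F k = dsp F x k := by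
  rw [← coordSpan_inf, ← coordSpan_inf, inf_assoc, inf_eq_right.2 (Vn_mono F h)]

theorem map_inf_Vn (g : ↥(Bgrp F)) (W : Submodule F (Vinf F)) (k : ℕ) :
    Submodule.map ((g : (Vinf F) ≃ₗ[F] (Vinf F)) : (Vinf F) →ₗ[F] (Vinf F)) W ⊓ Vn F k
      = Submodule.map ((g : (Vinf F) ≃ₗ[F] (Vinf F)) : (Vinf F) →ₗ[F] (Vinf F)) (W ⊓ Vn F k) := by
  rw [Submodule.map_inf _ (g : (Vinf F) ≃ₗ[F] (Vinf F)).injective, g.2 k]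

theorem finrank_map_B (g : ↥(Bgrp F)) (W : Submodule F (Vinf F)) :
    Module.finrank F (Submodule.map ((g : (Vinf F) ≃ₗ[F] (Vinf F)) : (Vinf F) →ₗ[F] (Vinf F)) W)
      = Module.finrank F W :=
  LinearEquiv.finrank_map_eq (g : (Vinf F) ≃ₗ[F] (Vinf F)) W

/-- the elements of `B` sending the selected coordinate vectors into `Z` -/
def Sset (c : ℕ → Bool) (n : ℕ) (Z : Submodule F (Vinf F)) : Set ↥(Bgrp F) :=
  {g | ∀ i, i < n → c i = true → (g : (Vinf F) ≃ₗ[F] (Vinf F)) (Finsupp.single i 1) ∈ Z}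

theorem measurable_Sset (c : ℕ → Bool) (n : ℕ) (Z : Submodule F (Vinf F)) :
    MeasurableSet (Sset F c n Z) := by
  have h1 : ∀ i : ℕ, MeasurableSet
      {g : ↥(Bgrp F) | (g : (Vinf F) ≃ₗ[F] (Vinf F)) (Finsupp.single i 1) ∈ Z} := by
    intro i
    let : MeasurableSpace (Vinf F) := ⊤
    refine ⟨{f : ℕ → Vinf F | f i ∈ Z}, ?_, rfl⟩
    exact (measurable_pi_apply i) (show MeasurableSet (Z : Set (Vinf F)) from trivial)
  have h2 : Sset F c n Z = ⋂ i : ℕ, ⋂ (_ : i < n), ⋂ (_ : c i = true),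
      {g : ↥(Bgrp F) | (g : (Vinf F) ≃ₗ[F] (Vinf F)) (Finsupp.single i 1) ∈ Z} := by
    ext g; simp [Sset]
  rw [h2]
  exact MeasurableSet.iInter fun i => MeasurableSet.iInter fun _ => MeasurableSet.iInter fun _ => h1 i

theorem map_dsp_le (c : ℕ → Bool) (n : ℕ) (Z : Submodule F (Vinf F)) (g : ↥(Bgrp F))
    : g ∈ Sset F c n Z ↔ 
    Submodule.map ((g : (Vinf F) ≃ₗ[F] (Vinf F)) : (Vinf F) →ₗ[F] (Vinf F)) (dsp F c n) ≤ Z := by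
  unfold dsp Sset
  rw [Finsupp.supported_eq_span_single, Submodule.map_span, Submodule.span_le]
  constructor
  · rintro hg _ ⟨_, ⟨i, ⟨hi, hc⟩, rfl⟩, rfl⟩
    exact hg i hi hc
  · intro h i hi hc
    exact h ⟨_, ⟨i, ⟨hi, hc⟩, rfl⟩, rfl⟩

theorem map_dsp_eq (c : ℕ → Bool) (n : ℕ) (Z : Submodule F (Vinf F)) (hZ : Z ≤ Vn F n)
    (hd : Module.finrank F Z = cnt c n) (g : ↥(Bgrp F)) : g ∈ Sset F c n Z ↔
    Submodule.map ((g : (Vinf F) ≃ₗ[F] (Vinf F)) : (Vinf F) →ₗ[F] (Vinf F)) (dsp F c n) = Z := by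
  rw [map_dsp_le]
  refine ⟨fun h => ?_, fun h => h.le⟩
  have : FiniteDimensional F Z := Submodule.finiteDimensional_of_le hZ
  exact Submodule.eq_of_le_of_finrank_eq h (by rw [finrank_map_B, finrank_dsp, hd])

theorem dim_map_dsp (c : ℕ → Bool) {k n : ℕ} (h : k ≤ n) (g : ↥(Bgrp F)) :
    Module.finrank F ↥(Submodule.map ((g : (Vinf F) ≃ₗ[F] (Vinf F)) : (Vinf F) →ₗ[F] (Vinf F)) (dsp F c n) ⊓ Vn F k) = cnt c k := by
  rw [map_inf_Vn, finrank_map_B, dsp_inf F c h, finrank_dsp]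

theorem echelon_inj (c : ℕ → Bool) (n : ℕ) (Z : Submodule F (Vinf F))
    (hd : ∀ k ≤ n, Module.finrank F ↥(Z ⊓ Vn F k) = cnt c k) (v : Vinf F) (hv : v ∈ Z)
    (k : ℕ) (hk : k ≤ n) (hvk : v ∈ Vn F k) (h0 : ∀ j < k, c j = true → v j = 0) : v = 0 := by
  induction k with
  | zero => ext i; exact hvk i (Nat.zero_le _)
  | succ k ih =>
    apply ih (by omega)
    · by_cases hc : c k = true
      · intro i hi
        rcases hi.eq_or_lt with rfl | hi
        · exact h0 _ (by omega) hc
        · exact hvk i hi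
      · have h1 : Z ⊓ Vn F k = Z ⊓ Vn F (k+1) := by
          apply Submodule.eq_of_le_of_finrank_eq
          · exact inf_le_inf_left _ (Vn_mono F (by omega))
          · rw [hd _ hk, hd _ (by omega), cnt_succ, if_neg hc]; simp
        have : v ∈ Z ⊓ Vn F k := h1 ▸ ⟨hv, hvk⟩
        exact this.2
    · intro j hj; exact h0 j (by omega)

theorem surj_aux0 {V W : Type} [AddCommGroup V] [AddCommGroup W] [Module F V] [Module F W]
    [FiniteDimensional F V] [FiniteDimensional F W] (L : V →ₗ[F] W) (h : ∀ v, L v = 0 → v = 0)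
    (hf : Module.finrank F V = Module.finrank F W) : Function.Surjective L :=
  (LinearMap.injective_iff_surjective_of_finrank_eq_finrank hf).1
    ((injective_iff_map_eq_zero L).2 h)

theorem surj_aux (P : Submodule F (Vinf F)) [Module.Finite F P] (s : Finset ℕ)
    (h : ∀ v ∈ P, (∀ j ∈ s, v j = 0) → v = 0) (hf : Module.finrank F P = s.card) (f : ℕ → F) :
    ∃ z ∈ P, ∀ j ∈ s, z j = f j := by
  have := surj_aux0 F (V := P) (W := s → F)
    { toFun := fun v j => (v : Vinf F) j
      map_add' := by intros; ext; simp
      map_smul' := by intros; ext; simp }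
    (by
      intro v hv
      apply Subtype.ext
      exact h v v.2 (fun j hj => congrFun hv ⟨j, hj⟩))
    (by rw [hf]; simp)
  obtain ⟨z, hz⟩ := this (fun j => f j)
  exact ⟨z, z.2, fun j hj => congrFun hz ⟨j, hj⟩⟩

theorem echelon_exists (c : ℕ → Bool) (n : ℕ) (Z : Submodule F (Vinf F))
    (hd : ∀ k ≤ n, Module.finrank F ↥(Z ⊓ Vn F k) = cnt c k) (i : ℕ) (hi : i < n) (hc : c i = true) :
    ∃ z ∈ Z, z ∈ Vn F (i+1) ∧ ∀ j < i + 1, c j = true → z j = if j = i then 1 else 0 := by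
  obtain ⟨s, hs⟩ : ∃ s, s = (Finset.range (i+1)).filter (fun j => c j = true) := ⟨_, rfl⟩
  have hsurj := surj_aux F (Z ⊓ Vn F (i+1)) s (by
      intro v hv h0
      apply echelon_inj F c n Z hd v hv.1 (i+1) hi hv.2
      intro j hj hcj
      exact h0 j (by simp [hs, hcj]; omega)) (by rw [hd _ hi]; simp [hs, cnt])
  obtain ⟨z, hzm, hz⟩ := hsurj (fun j => if j = i then 1 else 0)
  refine ⟨z, hzm.1, hzm.2, fun j hj hcj => ?_⟩
  exact hz j (by simp [hs, hcj]; omega)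

/-- positions of the free parameters -/
def Pset (c : ℕ → Bool) (n : ℕ) : Finset (ℕ × ℕ) :=
  (Finset.range n ×ˢ Finset.range n).filter
    (fun p => c p.1 = true ∧ c p.2 = false ∧ p.2 < p.1)

/-- extension by zero of the parameters -/
def ext0 (c : ℕ → Bool) (n : ℕ) (A : Pset c n → F) (i j : ℕ) : F :=
  if h : (i, j) ∈ Pset c n then A ⟨(i, j), h⟩ else 0

/-- the nilpotent part -/
noncomputable def Nmap (c : ℕ → Bool) (n : ℕ) (A : Pset c n → F) : Vinf F →ₗ[F] Vinf F :=
  Finsupp.linearCombination F (fun i => ∑ j ∈ Finset.range n, Finsupp.single j (ext0 F c n A i j))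

theorem Nmap_single (c : ℕ → Bool) (n : ℕ) (A : Pset c n → F) (i : ℕ) :
    Nmap F c n A (Finsupp.single i 1) = ∑ j ∈ Finset.range n, Finsupp.single j (ext0 F c n A i j) := by
  simp [Nmap]

theorem Nmap_single_apply (c : ℕ → Bool) (n : ℕ) (A : Pset c n → F) (i l : ℕ) :
    Nmap F c n A (Finsupp.single i 1) l = ext0 F c n A i l := by
  rw [Nmap_single, Finsupp.finsetSum_apply]
  simp only [Finsupp.single_apply, Finset.sum_ite_eq', Finset.mem_range]
  split_ifs with h
  · rfl
  · unfold ext0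
    rw [dif_neg]
    simp [Pset]; omega

theorem Nmap_of_false (c : ℕ → Bool) (n : ℕ) (A : Pset c n → F) (i : ℕ) (hi : c i = false) :
    Nmap F c n A (Finsupp.single i 1) = 0 := by
  ext l
  rw [Nmap_single_apply]
  simp [ext0, Pset, hi]

theorem Nmap_Nmap (c : ℕ → Bool) (n : ℕ) (A : Pset c n → F) (v : Vinf F) :
    Nmap F c n A (Nmap F c n A v) = 0 := by
  have : (Nmap F c n A).comp (Nmap F c n A) = 0 := by
    apply Finsupp.lhom_ext'
    intro i
    apply LinearMap.ext_ring
    simp only [LinearMap.comp_apply, Finsupp.lsingle_apply, LinearMap.zero_apply]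
    rw [Nmap_single, map_sum]
    apply Finset.sum_eq_zero
    intro j hj
    by_cases hc : c j = true
    · have : ext0 F c n A i j = 0 := by simp [ext0, Pset, hc]
      rw [this]; simp
    · rw [← mul_one (ext0 F c n A i j), ← smul_eq_mul, ← Finsupp.smul_single, map_smul,
        Nmap_of_false F c n A j (by simpa using hc), smul_zero]
  exact LinearMap.congr_fun this v

theorem Nmap_Vn (c : ℕ → Bool) (n : ℕ) (A : Pset c n → F) (k : ℕ) (v : Vinf F) (hv : v ∈ Vn F k) :
    Nmap F c n A v ∈ Vn F k := by
  rw [Vn_eq, Finsupp.supported_eq_span_single] at hv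
  induction hv using Submodule.span_induction with
  | mem x h =>
    obtain ⟨i, hi, rfl⟩ := h
    intro l hl
    simp only [Nmap_single_apply]
    unfold ext0
    rw [dif_neg]
    have : i < k := hi
    simp [Pset]; omega
  | zero => rw [map_zero]; exact Submodule.zero_mem _
  | add x y _ _ hx hy => rw [map_add]; exact Submodule.add_mem _ hx hy
  | smul a x _ hx => rw [map_smul]; exact Submodule.smul_mem _ _ hx

/-- the unipotent automorphism -/
noncomputable def uEquiv (c : ℕ → Bool) (n : ℕ) (A : Pset c n → F) : Vinf F ≃ₗ[F] Vinf F :=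
  LinearEquiv.ofLinearMap (LinearMap.id + Nmap F c n A) (LinearMap.id - Nmap F c n A)
    (by apply LinearMap.ext; intro v; simp [Nmap_Nmap])
    (by apply LinearMap.ext; intro v; simp [Nmap_Nmap])

theorem uEquiv_apply (c : ℕ → Bool) (n : ℕ) (A : Pset c n → F) (v : Vinf F) :
    uEquiv F c n A v = v + Nmap F c n A v := rfl

theorem uEquiv_symm_apply (c : ℕ → Bool) (n : ℕ) (A : Pset c n → F) (v : Vinf F) :
    (uEquiv F c n A).symm v = v - Nmap F c n A v := rfl

/-- the unipotent automorphism as an element of `B` -/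
noncomputable def uB (c : ℕ → Bool) (n : ℕ) (A : Pset c n → F) : ↥(Bgrp F) :=
  ⟨uEquiv F c n A, by
    intro k
    apply le_antisymm
    · rintro _ ⟨v, hv, rfl⟩
      exact Submodule.add_mem _ hv (Nmap_Vn F c n A k v hv)
    · intro v hv
      refine ⟨(uEquiv F c n A).symm v, ?_, (uEquiv F c n A).apply_symm_apply v⟩
      exact Submodule.sub_mem _ hv (Nmap_Vn F c n A k v hv)⟩

theorem uB_single_apply (c : ℕ → Bool) (n : ℕ) (A : Pset c n → F) (i l : ℕ) :
    (uB F c n A : Vinf F ≃ₗ[F] Vinf F) (Finsupp.single i 1) l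
      = (if l = i then 1 else 0) + ext0 F c n A i l := by
  change (uEquiv F c n A) (Finsupp.single i 1) l = _
  rw [uEquiv_apply, Finsupp.add_apply, Nmap_single_apply, Finsupp.single_apply]
  simp only [eq_comm]

theorem uB_exists (c : ℕ → Bool) (n : ℕ) (Z : Submodule F (Vinf F)) 
    (hd : ∀ k ≤ n, Module.finrank F ↥(Z ⊓ Vn F k) = cnt c k) :
    ∃ A : Pset c n → F, uB F c n A ∈ Sset F c n Z := by
  have h := echelon_exists F c n Z hd
  choose! z hz using h
  refine ⟨fun p => z p.1.1 p.1.2, ?_⟩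
  intro i hi hc
  obtain ⟨h1, h2, h3⟩ := hz i hi hc
  convert h1
  ext l
  rw [uB_single_apply]
  unfold ext0
  by_cases hl : l < i + 1
  · cases hcl : c l
    · have hli : l ≠ i := by rintro rfl; simp [hc] at hcl
      rw [dif_pos (by simp [Pset, hc, hcl]; omega)]
      simp [hli]
    · rw [h3 l hl hcl, dif_neg (by simp [Pset, hcl])]
      simp
  · rw [h2 l (by omega), dif_neg (by simp [Pset]; omega), if_neg (by omega)]
    simp

theorem uB_unique (c : ℕ → Bool) (n : ℕ) (Z : Submodule F (Vinf F)) 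
    (hd : ∀ k ≤ n, Module.finrank F ↥(Z ⊓ Vn F k) = cnt c k)
    (A B : Pset c n → F) (hA : uB F c n A ∈ Sset F c n Z) (hB : uB F c n B ∈ Sset F c n Z) :
    A = B := by
  funext p
  obtain ⟨⟨i, j⟩, hp⟩ := p
  have hp' := hp
  simp only [Pset, Finset.mem_filter, Finset.mem_product, Finset.mem_range] at hp'
  obtain ⟨⟨hi, hj⟩, hci, hcj, hji⟩ := hp'
  have h0 : (uB F c n A : Vinf F ≃ₗ[F] Vinf F) (Finsupp.single i 1)
      - (uB F c n B : Vinf F ≃ₗ[F] Vinf F) (Finsupp.single i 1) = 0 := by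
    apply echelon_inj F c n Z hd _ (Z.sub_mem (hA i hi hci) (hB i hi hci)) n le_rfl
    · intro l hl
      rw [Finsupp.sub_apply, uB_single_apply, uB_single_apply]
      simp [ext0, Pset, show ¬ l < n by omega]
    · intro l hl hcl
      rw [Finsupp.sub_apply, uB_single_apply, uB_single_apply]
      simp [ext0, Pset, hcl]
  have h1 := DFunLike.congr_fun h0 j
  rw [Finsupp.sub_apply, uB_single_apply, uB_single_apply] at h1
  simp only [ext0, dif_pos hp] at h1
  simpa [sub_eq_zero] using h1

theorem Sset_map (c : ℕ → Bool) (n : ℕ) (Z : Submodule F (Vinf F)) (u : ↥(Bgrp F)) :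
    (fun g => u⁻¹ * g) ⁻¹' (Sset F c n Z) = Sset F c n
      (Submodule.map ((u : (Vinf F) ≃ₗ[F] (Vinf F)) : (Vinf F) →ₗ[F] (Vinf F)) Z) := by
  ext g
  simp only [Sset, Set.mem_preimage, Set.mem_ofPred_eq]
  refine forall_congr' fun i => forall_congr' fun _ => forall_congr' fun _ => ?_
  constructor
  · intro h
    refine ⟨_, h, ?_⟩
    change ((u * (u⁻¹ * g) : ↥(Bgrp F)) : (Vinf F) ≃ₗ[F] (Vinf F)) _ = _
    rw [mul_inv_cancel_left]
  · rintro ⟨w, hw, hw'⟩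
    change (u⁻¹ : Vinf F ≃ₗ[F] Vinf F) ((g : Vinf F ≃ₗ[F] Vinf F) _) ∈ Z
    rw [← hw']
    change (u : Vinf F ≃ₗ[F] Vinf F).symm ((u : Vinf F ≃ₗ[F] Vinf F) w) ∈ Z
    rwa [LinearEquiv.symm_apply_apply]

theorem measure_Sset (μB : Measure ↥(Bgrp F)) (hμBprob : IsProbabilityMeasure μB)
    (hμBinv : ∀ (b : ↥(Bgrp F)) (S : Set ↥(Bgrp F)), MeasurableSet S →
      μB ((fun x => b * x) ⁻¹' S) = μB S)
    (c : ℕ → Bool) (n : ℕ) (Z : Submodule F (Vinf F)) (hZ : Z ≤ Vn F n)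
    (hd : ∀ k ≤ n, Module.finrank F ↥(Z ⊓ Vn F k) = cnt c k) :
    μB (Sset F c n Z) = ((Fintype.card F : ENNReal) ^ (Pset c n).card)⁻¹ := by
  let UD : (Pset c n → F) → Submodule F (Vinf F) := fun A =>
    Submodule.map ((uB F c n A : (Vinf F) ≃ₗ[F] (Vinf F)) : (Vinf F) →ₗ[F] (Vinf F)) (dsp F c n)
  have key : ∀ Z : Submodule F (Vinf F), Z ≤ Vn F n → 
      (∀ k ≤ n, Module.finrank F ↥(Z ⊓ Vn F k) = cnt c k) → ∃ A, UD A = Z := by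
    intro Z hZ hd
    obtain ⟨A, hA⟩ := uB_exists F c n Z hd
    refine ⟨A, (map_dsp_eq F c n Z hZ ?_ _).1 hA⟩
    rw [← hd n le_rfl, inf_eq_left.2 hZ]
  have dle : dsp F c n ≤ Vn F n := by rw [← coordSpan_inf]; exact inf_le_right
  have mle : ∀ g : ↥(Bgrp F), Submodule.map ((g : (Vinf F) ≃ₗ[F] (Vinf F)) : (Vinf F) →ₗ[F] (Vinf F)) (dsp F c n) ≤ Vn F n := by
    intro g
    conv_rhs => rw [← g.2 n]
    exact Submodule.map_mono dle
  have hUD : ∀ A, ∀ g, g ∈ Sset F c n (UD A) ↔ 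
      Submodule.map ((g : (Vinf F) ≃ₗ[F] (Vinf F)) : (Vinf F) →ₗ[F] (Vinf F)) (dsp F c n) = UD A := by
    intro A g
    exact map_dsp_eq F c n (UD A) (mle _) (by rw [finrank_map_B, finrank_dsp]) g
  have hm : ∀ A, μB (Sset F c n (UD A)) = μB (Sset F c n (dsp F c n)) := by
    intro A
    rw [← hμBinv (uB F c n A)⁻¹ _ (measurable_Sset F c n (dsp F c n)), Sset_map]
  have hun : (⋃ A, Sset F c n (UD A)) = Set.univ := by
    apply Set.eq_univ_of_forall
    intro g
    obtain ⟨A, hA⟩ := key _ (mle g) (fun k hk => dim_map_dsp F c hk g)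
    exact Set.mem_iUnion.2 ⟨A, (hUD A g).2 hA.symm⟩
  have hdis : Pairwise (Function.onFun Disjoint (fun A => Sset F c n (UD A))) := by
    intro A B hAB
    rw [Function.onFun, Set.disjoint_left]
    intro g hgA hgB
    apply hAB
    have hAB' : UD A = UD B := ((hUD A g).1 hgA).symm.trans ((hUD B g).1 hgB)
    apply uB_unique F c n (UD A) (fun k hk => dim_map_dsp F c hk _)
    · exact (hUD A _).2 rfl
    · rw [hAB']; exact (hUD B _).2 rfl
  have htot := measure_iUnion (μ := μB) hdis (fun A => measurable_Sset F c n (UD A))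
  rw [hun, measure_univ, tsum_fintype] at htot
  simp only [hm] at htot
  rw [Finset.sum_const, Finset.card_univ, Fintype.card_fun, Fintype.card_coe, nsmul_eq_mul] at htot
  obtain ⟨A, hA⟩ := key Z hZ hd
  rw [← hA, hm]
  push_cast at htot
  rw [mul_comm] at htot
  exact ENNReal.eq_inv_of_mul_eq_one_left htot.symm

theorem card_Pset (c : ℕ → Bool) (n : ℕ) :
    2 * ((Pset c n).card : ℤ) + (cnt c n : ℤ) * (cnt c n + 1)
      = 2 * ∑ k ∈ Finset.range n, ((k : ℤ) + 1) * (if c k = true then 1 else 0) := by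
  induction n with
  | zero => simp [Pset, cnt]
  | succ n ih =>
    have hcard : ((Pset c (n+1)).card : ℤ)
        = (Pset c n).card + (if c n = true then ((n : ℤ) - cnt c n) else 0) := by
      have hsp : Pset c (n+1) = Pset c n ∪ (if c n = true then
          ((Finset.range n).filter (fun j => ¬ c j = true)).image (fun j => (n, j)) else ∅) := by
        ext ⟨i, j⟩
        split_ifs with h
        · simp only [Pset, Finset.mem_filter, Finset.mem_product, Finset.mem_range,
            Finset.mem_union, Finset.mem_image, Prod.mk.injEq, Bool.not_eq_true]
          constructor
          · rintro ⟨⟨h1, h2⟩, h3, h4, h5⟩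
            by_cases hi : i = n
            · right; exact ⟨j, ⟨by omega, h4⟩, hi.symm, rfl⟩
            · left; exact ⟨⟨by omega, by omega⟩, h3, h4, h5⟩
          · rintro (⟨⟨h1, h2⟩, h3, h4, h5⟩ | ⟨j', ⟨h1, h2⟩, rfl, rfl⟩)
            · exact ⟨⟨by omega, by omega⟩, h3, h4, h5⟩
            · exact ⟨⟨by omega, by omega⟩, h, h2, h1⟩
        · simp only [Pset, Finset.mem_filter, Finset.mem_product, Finset.mem_range,
            Finset.union_empty]
          constructor
          · rintro ⟨⟨h1, h2⟩, h3, h4, h5⟩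
            have : i ≠ n := by rintro rfl; exact h h3
            exact ⟨⟨by omega, by omega⟩, h3, h4, h5⟩
          · rintro ⟨⟨h1, h2⟩, h3, h4, h5⟩
            exact ⟨⟨by omega, by omega⟩, h3, h4, h5⟩
      rw [hsp, Finset.card_union_of_disjoint]
      · split_ifs with h
        · rw [Finset.card_image_of_injective _ (fun a b h => by simpa using h)]
          have := Finset.card_filter_add_card_filter_not (s := Finset.range n) (fun j => c j = true)
          rw [Finset.card_range] at this
          unfold cnt
          push_cast
          omega
        · simp
      · rw [Finset.disjoint_left]
        rintro ⟨i, j⟩ h1 h2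
        split_ifs at h2 with h
        · simp [Pset] at h1 h2
          omega
        · simp at h2
    rw [Finset.sum_range_succ, mul_add 2, ← ih, hcard, cnt_succ]
    split_ifs with h
    · push_cast; ring
    · push_cast; ring

theorem finrank_step (X : Submodule F (Vinf F)) (k : ℕ) :
    Module.finrank F ↥(X ⊓ Vn F (k+1)) ≤ Module.finrank F ↥(X ⊓ Vn F k) + 1 := by
  have h := Submodule.finrank_sup_add_finrank_inf_eq (X ⊓ Vn F (k+1)) (Vn F k)
  have h1 : X ⊓ Vn F (k+1) ⊓ Vn F k = X ⊓ Vn F k := by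
    rw [inf_assoc, inf_eq_right.2 (Vn_mono F (Nat.le_succ k))]
  have h2 : Module.finrank F ↥(X ⊓ Vn F (k+1) ⊔ Vn F k) ≤ k + 1 := by
    have h3 := Submodule.finrank_mono
      (sup_le inf_le_right (Vn_mono F (Nat.le_succ k)) : X ⊓ Vn F (k+1) ⊔ Vn F k ≤ Vn F (k+1))
    rwa [finrank_Vn] at h3
  rw [h1, finrank_Vn] at h
  omega

theorem finrank_step' (X : Submodule F (Vinf F)) (k : ℕ) :
    Module.finrank F ↥(X ⊓ Vn F k) ≤ Module.finrank F ↥(X ⊓ Vn F (k+1)) :=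
  Submodule.finrank_mono (inf_le_inf_left _ (Vn_mono F (Nat.le_succ k)))

/-- the symbol as a boolean sequence -/
noncomputable def symB (X : Submodule F (Vinf F)) (k : ℕ) : Bool := decide (symInc F X k = 1)

theorem symInc_eq (X : Submodule F (Vinf F)) (k : ℕ) :
    symInc F X k = if symB F X k = true then 1 else 0 := by
  have := finrank_step F X k
  have h : symInc F X k ≤ 1 := by unfold symInc; omega
  simp only [symB, decide_eq_true_eq]
  split_ifs <;> omega

theorem cnt_symB (X : Submodule F (Vinf F)) (k : ℕ) :
    Module.finrank F ↥(X ⊓ Vn F k) = cnt (symB F X) k := by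
  induction k with
  | zero =>
    have h := Submodule.finrank_mono (inf_le_right : X ⊓ Vn F 0 ≤ Vn F 0)
    rw [finrank_Vn] at h
    simp [cnt]; simpa using h
  | succ k ih =>
    rw [cnt_succ, ← symInc_eq, ← ih]
    have := finrank_step' F X k
    unfold symInc; omega

theorem cnt_eq_imp (x y : ℕ → Bool) (k : ℕ) (h1 : cnt x k = cnt y k) (h2 : cnt x (k+1) = cnt y (k+1)) :
    x k = y k := by
  rw [cnt_succ, cnt_succ, h1] at h2
  cases hx : x k <;> cases hy : y k <;> simp [hx, hy] at h2 ⊢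

theorem cnt_congr (x y : ℕ → Bool) (k : ℕ) (h : ∀ i < k, x i = y i) : cnt x k = cnt y k := by
  unfold cnt
  congr 1
  apply Finset.filter_congr
  intro i hi
  rw [h i (by simpa using hi)]

theorem cnt_tail (x y : ℕ → Bool) (n : ℕ) (h0 : cnt x n = cnt y n) (h : ∀ i, n ≤ i → x i = y i) (k : ℕ)
    (hk : n ≤ k) : cnt x k = cnt y k := by
  induction k, hk using Nat.le_induction with
  | base => exact h0
  | succ k hk ih => rw [cnt_succ, cnt_succ, ih, h k hk]

theorem exists_perm (x y : ℕ → Bool) (n : ℕ) (h0 : cnt x n = cnt y n) (h : ∀ i, n ≤ i → x i = y i) :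
    ∃ σ : Equiv.Perm ℕ, (∀ i, n ≤ i → σ i = i) ∧ (∀ i, i < n → σ i < n) ∧ ∀ i, x i = y (σ i) := by
  classical
  have hc : ∀ z : ℕ → Bool, Fintype.card {i : Fin n // z i = true} = cnt z n := by
    intro z
    rw [Fintype.card_subtype]
    unfold cnt
    rw [Finset.card_filter, Finset.card_filter, Finset.sum_range]
  let e : {i : Fin n // x i = true} ≃ {i : Fin n // y i = true} :=
    Fintype.equivOfCardEq (by rw [hc, hc, h0])
  have he : ∀ i : Fin n, x i = y (e.extendSubtype i) := by
    intro i
    cases hx : x i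
    · have := e.extendSubtype_not_mem i (by simp [hx])
      exact (Bool.eq_false_iff.2 this).symm
    · exact (e.extendSubtype_mem i hx).symm
  let τ : Equiv.Perm ℕ := Equiv.Perm.extendDomain e.extendSubtype (Fin.equivSubtype (n := n))
  have h1 : ∀ i (hi : i < n), τ i = e.extendSubtype ⟨i, hi⟩ := by
    intro i hi
    have := Equiv.Perm.extendDomain_apply_subtype e.extendSubtype (Fin.equivSubtype (n := n)) (b := i) hi
    exact this
  have h2 : ∀ i, n ≤ i → τ i = i := by
    intro i hi
    exact Equiv.Perm.extendDomain_apply_not_subtype e.extendSubtype (Fin.equivSubtype (n := n)) (b := i) (by omega)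
  refine ⟨τ, h2, fun i hi => ?_, fun i => ?_⟩
  · rw [h1 i hi]; exact Fin.is_lt _
  · by_cases hi : i < n
    · rw [h1 i hi, ← he]
    · rw [h2 i (by omega)]; exact h i (by omega)

theorem exists_GLB (x y : ℕ → Bool) (n : ℕ) (h0 : cnt x n = cnt y n) (h : ∀ i, n ≤ i → x i = y i) :
    ∃ p ∈ GLBgrp F, Submodule.map (p : (Vinf F) →ₗ[F] (Vinf F)) (coordSpan F x) = coordSpan F y := by
  obtain ⟨σ, h1, h2, h3⟩ := exists_perm x y n h0 h
  have hmap : ∀ s : Set ℕ, Submodule.map ((Finsupp.domLCongr σ : Vinf F ≃ₗ[F] Vinf F) : Vinf F →ₗ[F] Vinf F)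
      (Finsupp.supported F F s) = Finsupp.supported F F (σ '' s) := by
    intro s
    rw [← Finsupp.lmapDomain_supported]
    congr 1
    apply Finsupp.lhom_ext
    intro a b
    simp [Finsupp.mapDomain_single]
  refine ⟨Finsupp.domLCongr σ, ⟨n, fun k hk => ?_⟩, ?_⟩
  · rw [Vn_eq, hmap]
    congr 1
    have hlt : ∀ i, σ i < k ↔ i < k := by
      intro i
      by_cases hi : i < n
      · have := h2 i hi; omega
      · rw [h1 i (by omega)]
    ext i
    constructor
    · rintro ⟨j, hj, rfl⟩; exact (hlt j).2 hj
    · intro hi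
      refine ⟨σ.symm i, ?_, by simp⟩
      have := hlt (σ.symm i)
      rw [Equiv.apply_symm_apply] at this
      exact this.1 hi
  · unfold coordSpan
    rw [← Finsupp.supported_eq_span_single, ← Finsupp.supported_eq_span_single, hmap]
    congr 1
    ext i
    constructor
    · rintro ⟨j, hj, rfl⟩; exact (h3 j).symm.trans hj
    · intro hi
      refine ⟨σ.symm i, ?_, by simp⟩
      change x _ = true
      rw [h3, Equiv.apply_symm_apply]; exact hi

theorem B_le_GLB (g : ↥(Bgrp F)) : (g : Vinf F ≃ₗ[F] Vinf F) ∈ GLBgrp F := ⟨0, fun n _ => g.2 n⟩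

theorem dim_phi (x : ℕ → Bool) (g : ↥(Bgrp F)) (k : ℕ) :
    Module.finrank F ↥(Submodule.map ((g : (Vinf F) ≃ₗ[F] (Vinf F)) : (Vinf F) →ₗ[F] (Vinf F)) (coordSpan F x) ⊓ Vn F k) = cnt x k := by
  rw [map_inf_Vn, finrank_map_B, coordSpan_inf, finrank_dsp]

theorem phi_sym (x : ℕ → Bool) (g : ↥(Bgrp F)) (n : ℕ) (X : Submodule F (Vinf F))
    (h : Submodule.map ((g : (Vinf F) ≃ₗ[F] (Vinf F)) : (Vinf F) →ₗ[F] (Vinf F)) (coordSpan F x) ⊓ Vn F n = X ⊓ Vn F n) :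
    ∀ i < n, x i = symB F X i := by
  have hk : ∀ k ≤ n, cnt x k = cnt (symB F X) k := by
    intro k hk
    rw [← dim_phi F x g, ← cnt_symB, ← inf_eq_right.2 (Vn_mono F hk), ← inf_assoc, h, inf_assoc]
  intro i hi
  exact cnt_eq_imp _ _ i (hk i hi.le) (hk (i+1) hi)

theorem phi_iff (x : ℕ → Bool) (g : ↥(Bgrp F)) (n : ℕ) (X : Submodule F (Vinf F)) :
    Submodule.map ((g : (Vinf F) ≃ₗ[F] (Vinf F)) : (Vinf F) →ₗ[F] (Vinf F)) (coordSpan F x) ⊓ Vn F n = X ⊓ Vn F n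
    ↔ (∀ i < n, x i = symB F X i) ∧ g ∈ Sset F (symB F X) n (X ⊓ Vn F n) := by
  have hS : (∀ i < n, x i = symB F X i) → dsp F x n = dsp F (symB F X) n := by
    intro h
    unfold dsp
    congr 1
    ext i
    constructor
    · rintro ⟨h1, h2⟩; exact ⟨h1, (h i h1) ▸ h2⟩
    · rintro ⟨h1, h2⟩; exact ⟨h1, (h i h1).trans h2⟩
  have h2 := map_dsp_eq F (symB F X) n (X ⊓ Vn F n) inf_le_right (cnt_symB F X n) g
  constructor
  · intro h
    have h1 := phi_sym F x g n X h
    refine ⟨h1, ?_⟩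
    rw [h2, ← hS h1, ← coordSpan_inf, ← map_inf_Vn, h]
  · rintro ⟨h1, h3⟩
    rw [map_inf_Vn, coordSpan_inf, hS h1]
    exact h2.1 h3

theorem trueCount_eq (c : ℕ → Bool) (n : ℕ) : trueCount (fun k : Fin n => c k) = cnt c n := by
  unfold trueCount cnt
  rw [Finset.card_filter, Finset.card_filter, Finset.sum_range]

theorem preimage_eq (n : ℕ) (X Y : Submodule F (Vinf F))
    (hdim : ∀ k : ℕ, n ≤ k →
      Module.finrank F ↥(X ⊓ Vn F k) = Module.finrank F ↥(Y ⊓ Vn F k)) :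
    psiMap F ⁻¹' (Upair F n X Y) =
      (Aset n (fun k => symB F X k) (fun k => symB F Y k)) ×ˢ
        ((Sset F (symB F X) n (X ⊓ Vn F n)) ×ˢ (Sset F (symB F Y) n (Y ⊓ Vn F n))) := by
  ext ⟨⟨⟨x, y⟩, hT⟩, g, h⟩
  simp only [Set.mem_preimage, Set.mem_prod]
  change (_ ∧ _ ∧ _ ∧ _) ↔ (_ ∧ _ ∧ _)
  simp only [psiMap, phi_iff]
  constructor
  · rintro ⟨-, ⟨h1, h2⟩, ⟨h3, h4⟩, h5⟩
    have h5 : ∀ k, n ≤ k → cnt x k = cnt y k := by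
      intro k hk
      rw [← dim_phi F x g, ← dim_phi F y h]
      exact h5 k hk
    refine ⟨⟨fun k => ⟨h1 k k.2, h3 k k.2⟩, fun k hk => ?_⟩, h2, h4⟩
    exact cnt_eq_imp x y k (h5 k hk) (h5 (k+1) (by omega))
  · rintro ⟨⟨h1, h2⟩, h3, h4⟩
    have hx : ∀ i < n, x i = symB F X i := fun i hi => (h1 ⟨i, hi⟩).1
    have hy : ∀ i < n, y i = symB F Y i := fun i hi => (h1 ⟨i, hi⟩).2
    have h0 : cnt x n = cnt y n := by
      rw [cnt_congr x _ n hx, cnt_congr y _ n hy, ← cnt_symB, ← cnt_symB, hdim n le_rfl]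
    refine ⟨?_, ⟨hx, h3⟩, ⟨hy, h4⟩, fun k hk => ?_⟩
    swap
    · exact (dim_phi F x g k).trans ((cnt_tail x y n h0 h2 k hk).trans (dim_phi F y h k).symm)
    obtain ⟨p, hp, hpm⟩ := exists_GLB F x y n h0 h2
    refine ⟨h * p * (g : Vinf F ≃ₗ[F] Vinf F)⁻¹, mul_mem (mul_mem (B_le_GLB F h) hp)
      (inv_mem (B_le_GLB F g)), ?_⟩
    rw [← Submodule.map_comp, ← hpm, ← Submodule.map_comp]
    congr 1
    ext v
    simp

/-- **Proposition 5.9** (explicit values of the measure `ρ_{t₁,t₂}` on the basic sets of the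
groupoid `Gr²(V)`): with `R_{t₁,t₂}` the measure on `T` determined by
`R(A(i;j)) = t₁^{∑ i_k} t₂^{n-∑ i_k}`, `μB` the Haar probability measure of `B`, and
`ρ = ρ_{t₁,t₂}` the pushforward of `R ⊗ μB ⊗ μB` under `ψ`, one has, whenever
`(X,Y) ∈ Gr²(V)` and `dim(X ∩ V_k) = dim(Y ∩ V_k)` for all `k ≥ n`, with `m = dim(X ∩ V_n)`:
`ρ(U^n(X,Y)) = q^{m(m+1) - ∑_{k=1}^n k(Sym(X)_k + Sym(Y)_k)} · t₁^m · t₂^{n-m}`. -/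
theorem rho_value_on_basic_sets
    (t₁ t₂ : ℝ) (ht₁ : 0 ≤ t₁) (ht₂ : 0 ≤ t₂) (hsum : t₁ + t₂ = 1)
    (μB : Measure ↥(Bgrp F)) (hμBprob : IsProbabilityMeasure μB)
    (hμBinv : ∀ (b : ↥(Bgrp F)) (S : Set ↥(Bgrp F)), MeasurableSet S →
      μB ((fun x => b * x) ⁻¹' S) = μB S)
    (R : Measure ↥Tset)
    (hR : ∀ (n : ℕ) (c d : Fin n → Bool), trueCount c = trueCount d →
      R (Aset n c d) = ENNReal.ofReal (t₁ ^ trueCount c * t₂ ^ (n - trueCount c)))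
    (ρ : Measure (Submodule F (Vinf F) × Submodule F (Vinf F)))
    (hρ : ∀ A : Set (Submodule F (Vinf F) × Submodule F (Vinf F)), MeasurableSet A →
      ρ A = (R.prod (μB.prod μB)) (psiMap F ⁻¹' A))
    (n : ℕ) (X Y : Submodule F (Vinf F))
    (hXY : ∃ g ∈ GLBgrp F, Submodule.map (g : (Vinf F) →ₗ[F] (Vinf F)) X = Y)
    (hdim : ∀ k : ℕ, n ≤ k →
      Module.finrank F ↥(X ⊓ Vn F k) = Module.finrank F ↥(Y ⊓ Vn F k)) :
    ρ (Upair F n X Y)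
      = ENNReal.ofReal ((Fintype.card F : ℝ) ^
          (((Module.finrank F ↥(X ⊓ Vn F n) * (Module.finrank F ↥(X ⊓ Vn F n) + 1) : ℕ) : ℤ)
            - ∑ k ∈ Finset.range n, ((k : ℤ) + 1) * ((symInc F X k : ℤ) + (symInc F Y k : ℤ)))
          * t₁ ^ (Module.finrank F ↥(X ⊓ Vn F n))
          * t₂ ^ (n - Module.finrank F ↥(X ⊓ Vn F n))) := by
  have hm : cnt (symB F X) n = cnt (symB F Y) n := by
    rw [← cnt_symB, ← cnt_symB, hdim n le_rfl]
  have hU : MeasurableSet (Upair F n X Y) :=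
    MeasurableSpace.measurableSet_generateFrom ⟨n, X, Y, rfl⟩
  have hS : ∀ X : Submodule F (Vinf F), μB (Sset F (symB F X) n (X ⊓ Vn F n))
      = ENNReal.ofReal ((Fintype.card F : ℝ) ^ (-((Pset (symB F X) n).card : ℤ))) := by
    intro X
    rw [measure_Sset F μB hμBprob hμBinv _ n _ inf_le_right]
    · have hq : (0 : ℝ) < Fintype.card F := by exact_mod_cast Fintype.card_pos
      rw [zpow_neg, zpow_natCast, ENNReal.ofReal_inv_of_pos (by positivity),
        ENNReal.ofReal_pow hq.le, ENNReal.ofReal_natCast]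
    · intro k hk
      rw [inf_assoc, inf_eq_right.2 (Vn_mono F hk), cnt_symB]
  rw [hρ _ hU, preimage_eq F n X Y hdim, Measure.prod_prod, Measure.prod_prod, hS, hS,
    hR n _ _ (by rw [trueCount_eq, trueCount_eq, hm]), trueCount_eq,
    ← ENNReal.ofReal_mul (by positivity), ← ENNReal.ofReal_mul (by positivity)]
  congr 1
  have hq : (Fintype.card F : ℝ) ≠ 0 := by exact_mod_cast Fintype.card_ne_zero
  rw [← zpow_add₀ hq, cnt_symB, mul_comm, mul_assoc]
  congr 2
  have hX := card_Pset (symB F X) n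
  have hY := card_Pset (symB F Y) n
  rw [← hm] at hY
  simp only [symInc_eq, mul_add, Finset.sum_add_distrib]
  push_cast
  linarith
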